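/- For every q ≥ 2 and every δ ∈ [0,1], liminf_{n→∞} (1/n) log_2 M̄*_q(n; ⌈δn⌉) ≥ 2·log_2(q) − max_{λ ∈ [δ/3, δ]} [ 2λ·H((δ−λ)/(2λ)) + β_q(λ) ], where β_q(λ) = α_q(λ) for λ ≤ ρ* and β_q(λ) = α_q(ρ*) for λ ≥ ρ*, with α_q(λ) = (1−λ)·H(λ/(1−λ)) + (1−λ)·log_2(q) + λ·log_2(q−1) and ρ* = (1/2)·(1 − √(q/(5q−4))). -/

import Mathlib

/-!
The bound is a Gilbert–Varshamov argument averaged over the whole space. In the graph on `Z_q^n`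
joining strings at distance less than `d`, a maximal independent set among the vertices of at most
twice the average closed degree has at least `q^(2n) / (4 P)` elements, where `P` counts the
ordered pairs `(x, y)` with `x = y` or `dist(x, y) < d` (`exists_independent`, `gv_bound`).

To bound `P`, note that transpositions are involutions, so `y` arises from `x` by two rounds of
disjoint transpositions, at `K₁` and then at `K₂`, with `|K₁| + |K₂| < d`. Dropping those of the
first round that exchange equal symbols, cancelling common ones, and moving to the first round
every transposition of the second that overlaps none of the first, one reaches a normal form
(`exists_normal_form`): each `k ∈ K₁` has `x_k ≠ x_{k+1}`, and each element of `K₂` is adjacent to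
an element of `K₁`. For `|K₁| = k` there are at most `C(n-k, k)` choices of `K₁`, then at most
`q^(n-k) (q-1)^k` strings `x`, and then `K₂` is a subset of at most `2k` locations with at most
`d - 1 - k` elements (`card_closePairs_le`).

The first two factors have exponent `α_q(k/n) ≤ β_q(k/n)`, because `α_q` increases up to `ρ*` and
decreases from there to `1/2`. With `l = k/n`, the number of `K₂` is at most `2^(2 n l H((δ-l)/(2l)))`
if `l > δ/2`. If `l ≤ δ/2`, the trivial bound `2^(2 n l)` together with the monotonicity of `β_q`
gives at most the value of the objective at `δ/2`, where `H = 1` (`pairBound_le_exp`). So `P` is at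
most `n + 1` times the maximal exponential term, and the polynomial factors vanish in the limit.
-/

/-- Valid locations (0-indexed) for simultaneous disjoint transpositions in a string of
length `n`: each location `k` swaps positions `k` and `k+1`, and distinct locations
are at distance at least 2. -/
def ValidLocs (n : ℕ) (K : Finset ℕ) : Prop :=
  (∀ k ∈ K, k + 1 < n) ∧ ∀ k ∈ K, ∀ l ∈ K, k ≠ l → k + 2 ≤ l ∨ l + 2 ≤ k

/-- `y` is the result of applying the transpositions at the locations in `K` to `x`. -/
def ApplyLocs {n q : ℕ} (K : Finset ℕ) (x y : Fin n → Fin q) : Prop :=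
  ∀ i : Fin n, y i =
    if h : (i : ℕ) ∈ K ∧ (i : ℕ) + 1 < n then x ⟨(i : ℕ) + 1, h.2⟩
    else if (i : ℕ) ≠ 0 ∧ (i : ℕ) - 1 ∈ K then
      x ⟨(i : ℕ) - 1, lt_of_le_of_lt (Nat.sub_le _ _) i.isLt⟩
    else x i

/-- `B(x;t)`: the set of strings obtainable from `x` by at most `t` disjoint transpositions. -/
def BallB {n q : ℕ} (t : ℕ) (x : Fin n → Fin q) : Set (Fin n → Fin q) :=
  { y | ∃ K : Finset ℕ, K.card ≤ t ∧ ValidLocs n K ∧ ApplyLocs K x y }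

/-- `dist(x,y) = min { t + s : B(x;t) ∩ B(y;s) ≠ ∅ }`, equal to `⊤` if no such `t,s` exist. -/
noncomputable def tdist {n q : ℕ} (x y : Fin n → Fin q) : ℕ∞ :=
  sInf { d : ℕ∞ | ∃ t s : ℕ, d = ((t + s : ℕ) : ℕ∞) ∧ (BallB t x ∩ BallB s y).Nonempty }

/-- A code `C` corrects `t` transpositions. -/
def Corrects {n q : ℕ} (t : ℕ) (C : Set (Fin n → Fin q)) : Prop :=
  ∀ x ∈ C, ∀ x' ∈ C, x ≠ x' → BallB t x ∩ BallB t x' = ∅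

/-- The number of runs of identical consecutive symbols in a string. -/
def runCount {n q : ℕ} (x : Fin n → Fin q) : ℕ :=
  if n = 0 then 0
  else 1 + (Finset.univ.filter (fun i : Fin (n - 1) =>
      x ⟨(i : ℕ), by have := i.isLt; omega⟩ ≠ x ⟨(i : ℕ) + 1, by have := i.isLt; omega⟩)).card

/-- The binary entropy function `H(x) = -x log₂ x - (1-x) log₂ (1-x)` (with `H(0)=H(1)=0`). -/
noncomputable def binH (x : ℝ) : ℝ :=
  -(x * Real.logb 2 x) - (1 - x) * Real.logb 2 (1 - x)

/-- The exponent `α_q(ρ)`. -/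
noncomputable def alphaFun (q : ℕ) (ρ : ℝ) : ℝ :=
  (1 - ρ) * binH (ρ / (1 - ρ)) + (1 - ρ) * Real.logb 2 q + ρ * Real.logb 2 ((q : ℝ) - 1)

/-- The maximizer `ρ* = (1/2)(1 - √(q/(5q-4)))` of `α_q`. -/
noncomputable def rhoStar (q : ℕ) : ℝ :=
  (1 / 2) * (1 - Real.sqrt ((q : ℝ) / (5 * (q : ℝ) - 4)))

/-- `M̄*_q(n;d)`: the maximum cardinality of a code in `Z_q^n` with `tdist ≥ d` between
distinct codewords. -/
noncomputable def MstarBar (q n d : ℕ) : ℕ :=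
  sSup { m : ℕ | ∃ C : Finset (Fin n → Fin q),
    C.Nonempty ∧ (∀ x ∈ C, ∀ x' ∈ C, x ≠ x' → (d : ℕ∞) ≤ tdist x x') ∧ C.card = m }

/-- `β_q(λ)`. -/
noncomputable def betaFun (q : ℕ) (l : ℝ) : ℝ :=
  if l ≤ rhoStar q then alphaFun q l else alphaFun q (rhoStar q)

/-! ### Normal form of pairs of strings at small distance -/

/-- The permutation of positions underlying simultaneous transpositions at `K`. -/
def swapMap {n : ℕ} (K : Finset ℕ) (i : Fin n) : Fin n :=
  if h : (i : ℕ) ∈ K ∧ (i : ℕ) + 1 < n then ⟨(i : ℕ) + 1, h.2⟩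
  else if (i : ℕ) ≠ 0 ∧ (i : ℕ) - 1 ∈ K then
    ⟨(i : ℕ) - 1, lt_of_le_of_lt (Nat.sub_le _ _) i.isLt⟩
  else i

lemma applyLocs_iff {n q : ℕ} (K : Finset ℕ) (x y : Fin n → Fin q) :
    ApplyLocs K x y ↔ y = x ∘ swapMap K := by
  unfold ApplyLocs swapMap
  rw [funext_iff]
  refine forall_congr' fun i => ?_
  simp only [Function.comp]
  split_ifs <;> rfl

lemma swapMap_val {n : ℕ} (K : Finset ℕ) (i : Fin n) :
    (swapMap K i : ℕ) = if (i : ℕ) ∈ K ∧ (i : ℕ) + 1 < n then (i : ℕ) + 1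
      else if (i : ℕ) ≠ 0 ∧ (i : ℕ) - 1 ∈ K then (i : ℕ) - 1 else i := by
  unfold swapMap
  split_ifs <;> rfl

lemma swapMap_swapMap {n : ℕ} {K : Finset ℕ} (hK : ValidLocs n K) (i : Fin n) :
    swapMap K (swapMap K i) = i := by
  obtain ⟨h1, h2⟩ := hK
  apply Fin.ext
  rw [swapMap_val, swapMap_val]
  have a1 := h1 (i : ℕ)
  have a2 := h1 ((i : ℕ) - 1)
  have e1 : (i : ℕ) ∈ K → (i : ℕ) + 1 ∉ K := fun h h' => by have := h2 _ h _ h'; omega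
  have e2 : (i : ℕ) - 1 ∈ K → (i : ℕ) ≠ 0 → (i : ℕ) ∉ K := fun h h0 h' => by
    have := h2 _ h _ h'; omega
  have := i.isLt
  grind

lemma ValidLocs.erase {n : ℕ} {K : Finset ℕ} (hK : ValidLocs n K) (k : ℕ) :
    ValidLocs n (K.erase k) :=
  ⟨fun a ha => hK.1 a (Finset.mem_of_mem_erase ha), fun a ha b hb =>
    hK.2 a (Finset.mem_of_mem_erase ha) b (Finset.mem_of_mem_erase hb)⟩

/-- Transposing two equal symbols has no effect. -/
lemma swapMap_erase_of_eq {n q : ℕ} {K : Finset ℕ} (hK : ValidLocs n K) (x : Fin n → Fin q)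
    {k : ℕ} (hk : k ∈ K)
    (hx : x ⟨k, by have := hK.1 k hk; omega⟩ = x ⟨k + 1, hK.1 k hk⟩) (i : Fin n) :
    x (swapMap (K.erase k) i) = x (swapMap K i) := by
  obtain ⟨h1, h2⟩ := hK
  have hkn := h1 k hk
  by_cases c1 : (i : ℕ) = k
  · have e1 : swapMap (K.erase k) i = ⟨k, by omega⟩ := by
      apply Fin.ext; rw [swapMap_val]
      have := h2 k hk (k - 1)
      grind
    have e2 : swapMap K i = ⟨k + 1, hkn⟩ := by
      apply Fin.ext; rw [swapMap_val]; grind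
    rw [e1, e2, hx]
  by_cases c2 : (i : ℕ) = k + 1
  · have := h2 k hk (k + 1)
    have e1 : swapMap (K.erase k) i = ⟨k + 1, by omega⟩ := by
      apply Fin.ext; rw [swapMap_val]
      grind
    have e2 : swapMap K i = ⟨k, by omega⟩ := by
      apply Fin.ext; rw [swapMap_val]; grind
    rw [e1, e2, hx]
  · congr 1
    apply Fin.ext; rw [swapMap_val, swapMap_val]; grind

lemma swapMap_erase_erase {n : ℕ} {K₁ K₂ : Finset ℕ} (h₁ : ValidLocs n K₁)
    (h₂ : ValidLocs n K₂) {k : ℕ} (hk₁ : k ∈ K₁) (hk₂ : k ∈ K₂) (i : Fin n) :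
    swapMap (K₁.erase k) (swapMap (K₂.erase k) i) = swapMap K₁ (swapMap K₂ i) := by
  apply Fin.ext
  have := h₁.1 k hk₁
  have := h₁.2 k hk₁ (k - 1)
  have := h₁.2 k hk₁ (k + 1)
  have := h₂.2 k hk₂ (k - 1)
  have := h₂.2 k hk₂ (k + 1)
  by_cases c1 : (i : ℕ) = k
  · rw [swapMap_val, swapMap_val, swapMap_val, swapMap_val]
    grind
  by_cases c2 : (i : ℕ) = k + 1
  · rw [swapMap_val, swapMap_val, swapMap_val, swapMap_val]
    grind
  have e : swapMap (K₂.erase k) i = swapMap K₂ i := by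
    apply Fin.ext; rw [swapMap_val, swapMap_val]; grind
  have e1 : (swapMap K₂ i : ℕ) ≠ k := by rw [swapMap_val]; grind
  have e2 : (swapMap K₂ i : ℕ) ≠ k + 1 := by rw [swapMap_val]; grind
  rw [e, swapMap_val, swapMap_val K₁]
  grind

/-- A transposition of the second round that touches none of the first round
may be carried out in the first round instead. -/
lemma swapMap_insert_erase {n : ℕ} {K₁ K₂ : Finset ℕ}
    (h₂ : ValidLocs n K₂) {k : ℕ} (hk₁ : k ∉ K₁) (hk₁' : k + 1 ∉ K₁)
    (hk₁'' : ∀ l ∈ K₁, l + 1 ≠ k) (hk₂ : k ∈ K₂) (i : Fin n) :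
    swapMap (insert k K₁) (swapMap (K₂.erase k) i) = swapMap K₁ (swapMap K₂ i) := by
  apply Fin.ext
  have := h₂.1 k hk₂
  have := hk₁'' (k - 1)
  have := h₂.2 k hk₂ (k - 1)
  have := h₂.2 k hk₂ (k + 1)
  by_cases c1 : (i : ℕ) = k
  · rw [swapMap_val, swapMap_val, swapMap_val, swapMap_val]
    grind
  by_cases c2 : (i : ℕ) = k + 1
  · rw [swapMap_val, swapMap_val, swapMap_val, swapMap_val]
    grind
  have e : swapMap (K₂.erase k) i = swapMap K₂ i := by
    apply Fin.ext; rw [swapMap_val, swapMap_val]; grind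
  have e1 : (swapMap K₂ i : ℕ) ≠ k := by rw [swapMap_val]; grind
  have e2 : (swapMap K₂ i : ℕ) ≠ k + 1 := by rw [swapMap_val]; grind
  rw [e, swapMap_val, swapMap_val K₁]
  grind

lemma ValidLocs.insert_of_far {n : ℕ} {K : Finset ℕ} (hK : ValidLocs n K) {k : ℕ}
    (hk : k + 1 < n) (hk' : k + 1 ∉ K) (hk'' : ∀ l ∈ K, l + 1 ≠ k) :
    ValidLocs n (insert k K) := by
  obtain ⟨h1, h2⟩ := hK
  refine ⟨?_, ?_⟩
  · grind
  · intro a ha b hb hab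
    rw [Finset.mem_insert] at ha hb
    rcases ha with rfl | ha <;> rcases hb with rfl | hb
    · exact absurd rfl hab
    · have := hk'' b hb
      have : b ≠ a + 1 := fun h => hk' (h ▸ hb)
      omega
    · have := hk'' a ha
      have : a ≠ b + 1 := fun h => hk' (h ▸ ha)
      omega
    · exact h2 a ha b hb hab

/-- `K` consists of locations of `x` with distinct adjacent symbols. -/
def Effective {n q : ℕ} (K : Finset ℕ) (x : Fin n → Fin q) : Prop :=
  ∀ k ∈ K, ∀ h : k + 1 < n, x ⟨k, by omega⟩ ≠ x ⟨k + 1, h⟩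

/-- The locations adjacent to a location in `K` (together with the location `0` if `0 ∈ K`,
which is harmless as this set serves only as an upper bound). -/
def nbrs (K : Finset ℕ) : Finset ℕ := K.image (· + 1) ∪ K.image (· - 1)

/-- Normal form of a pair of rounds of disjoint transpositions: the first round is effective and
every transposition of the second round is adjacent to one of the first round. The induction is on
`|K₁| + 2 |K₂|`, which decreases also when a transposition moves from the second round to the
first. -/
lemma exists_normal_form {n q : ℕ} (x : Fin n → Fin q) (m : ℕ) :
    ∀ K₁ K₂ : Finset ℕ, K₁.card + 2 * K₂.card ≤ m → ValidLocs n K₁ → ValidLocs n K₂ →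
      ∃ L₁ L₂ : Finset ℕ, ValidLocs n L₁ ∧ L₁.card + L₂.card ≤ K₁.card + K₂.card ∧
        Effective L₁ x ∧ L₂ ⊆ nbrs L₁ ∧
        ∀ i, x (swapMap L₁ (swapMap L₂ i)) = x (swapMap K₁ (swapMap K₂ i)) := by
  induction m with
  | zero =>
    intro K₁ K₂ hm h₁ h₂
    have e₁ : K₁ = ∅ := Finset.card_eq_zero.1 (by omega)
    have e₂ : K₂ = ∅ := Finset.card_eq_zero.1 (by omega)
    subst e₁ e₂
    exact ⟨∅, ∅, h₁, le_rfl, by simp [Effective], by simp, fun _ => rfl⟩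
  | succ m ih =>
    intro K₁ K₂ hm h₁ h₂
    by_cases ha : Effective K₁ x
    swap
    · unfold Effective at ha
      push Not at ha
      obtain ⟨k, hk, hkn, hx⟩ := ha
      have hc := Finset.card_erase_of_mem hk
      have hp := Finset.card_pos.2 ⟨k, hk⟩
      obtain ⟨L₁, L₂, a, b, c, d, e⟩ := ih (K₁.erase k) K₂ (by omega) (h₁.erase k) h₂
      exact ⟨L₁, L₂, a, by omega, c, d, fun i => by rw [e, swapMap_erase_of_eq h₁ x hk hx]⟩
    by_cases hb : ∃ k ∈ K₂, k ∈ K₁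
    · obtain ⟨k, hk₂, hk₁⟩ := hb
      have hc := Finset.card_erase_of_mem hk₁
      have hp := Finset.card_pos.2 ⟨k, hk₁⟩
      have hc' := Finset.card_erase_of_mem hk₂
      have hp' := Finset.card_pos.2 ⟨k, hk₂⟩
      obtain ⟨L₁, L₂, a, b, c, d, e⟩ := ih (K₁.erase k) (K₂.erase k) (by omega)
        (h₁.erase k) (h₂.erase k)
      exact ⟨L₁, L₂, a, by omega, c, d, fun i => by rw [e, swapMap_erase_erase h₁ h₂ hk₁ hk₂]⟩
    by_cases hn : K₂ ⊆ nbrs K₁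
    · exact ⟨K₁, K₂, h₁, le_rfl, ha, hn, fun _ => rfl⟩
    obtain ⟨k, hk₂, hk⟩ := Finset.not_subset.1 hn
    have hk₁ : k ∉ K₁ := fun h => hb ⟨k, hk₂, h⟩
    simp only [nbrs, Finset.mem_union, Finset.mem_image, not_or, not_exists, not_and] at hk
    have hk' : k + 1 ∉ K₁ := fun h => hk.2 _ h (by omega)
    have hc := Finset.card_insert_of_notMem hk₁
    have hc' := Finset.card_erase_of_mem hk₂
    have hp' := Finset.card_pos.2 ⟨k, hk₂⟩
    obtain ⟨L₁, L₂, a, b, c, d, e⟩ := ih (insert k K₁) (K₂.erase k) (by omega)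
      (h₁.insert_of_far (h₂.1 k hk₂) hk' hk.1) (h₂.erase k)
    exact ⟨L₁, L₂, a, by omega, c, d, fun i => by
      rw [e, swapMap_insert_erase h₂ hk₁ hk' hk.1 hk₂]⟩

lemma normal_form_of_tdist_lt {n q d : ℕ} {x y : Fin n → Fin q} (h : tdist x y < (d : ℕ∞)) :
    ∃ L₁ L₂ : Finset ℕ, ValidLocs n L₁ ∧ L₁.card + L₂.card ≤ d - 1 ∧
      Effective L₁ x ∧ L₂ ⊆ nbrs L₁ ∧ y = fun i => x (swapMap L₁ (swapMap L₂ i)) := by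
  unfold tdist at h
  rw [sInf_lt_iff] at h
  obtain ⟨_, ⟨t, s, rfl, z, ⟨K₁, c₁, v₁, a₁⟩, ⟨K₂, c₂, v₂, a₂⟩⟩, hd⟩ := h
  have hd' : t + s < d := by exact_mod_cast hd
  rw [applyLocs_iff] at a₁ a₂
  obtain ⟨L₁, L₂, a, b, c, e, f⟩ := exists_normal_form x _ K₁ K₂ le_rfl v₁ v₂
  refine ⟨L₁, L₂, a, by omega, c, e, ?_⟩
  funext i
  rw [f]
  have h1 := congrFun a₂ (swapMap K₂ i)
  have h2 := congrFun a₁ (swapMap K₂ i)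
  simp only [Function.comp, swapMap_swapMap v₂] at h1 h2
  rw [← h1, h2]

lemma tdist_comm {n q : ℕ} (x y : Fin n → Fin q) : tdist x y = tdist y x := by
  unfold tdist
  congr 1
  ext d
  constructor
  all_goals
    rintro ⟨t, s, rfl, h⟩
    exact ⟨s, t, by rw [add_comm], by rwa [Set.inter_comm]⟩

/-! ### Counting close pairs and the Gilbert–Varshamov bound -/

open Classical in
/-- Valid sets of `k` locations in strings of length `n`. -/
noncomputable def validSets (n k : ℕ) : Finset (Finset ℕ) :=
  (Finset.range n).powerset.filter fun K => ValidLocs n K ∧ K.card = k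

lemma mem_validSets {n k : ℕ} {K : Finset ℕ} :
    K ∈ validSets n k ↔ ValidLocs n K ∧ K.card = k := by
  simp only [validSets, Finset.mem_filter, Finset.mem_powerset, and_iff_right_iff_imp]
  rintro ⟨h, -⟩ a ha
  have := h.1 a ha
  exact Finset.mem_range.2 (by omega)

lemma card_validSets_zero (n : ℕ) : (validSets n 0).card ≤ 1 := by
  rw [Finset.card_le_one]
  intro a ha b hb
  rw [mem_validSets, Finset.card_eq_zero] at ha hb
  rw [ha.2, hb.2]

lemma card_validSets_small {n : ℕ} (hn : n ≤ 1) (k : ℕ) : validSets n (k + 1) = ∅ := by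
  rw [Finset.eq_empty_iff_forall_notMem]
  intro K hK
  rw [mem_validSets] at hK
  obtain ⟨a, ha⟩ := Finset.card_pos.1 (by omega : 0 < K.card)
  have := hK.1.1 a ha
  omega

lemma card_validSets_succ (n k : ℕ) :
    (validSets (n + 2) (k + 1)).card ≤ (validSets (n + 1) (k + 1)).card + (validSets n k).card := by
  have : validSets (n + 2) (k + 1) ⊆
      validSets (n + 1) (k + 1) ∪ (validSets n k).image (insert n) := by
    intro K hK
    rw [mem_validSets] at hK
    obtain ⟨⟨h1, h2⟩, h3⟩ := hK
    rw [Finset.mem_union, Finset.mem_image, mem_validSets]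
    by_cases hn : n ∈ K
    · right
      refine ⟨K.erase n, ?_, Finset.insert_erase hn⟩
      rw [mem_validSets, Finset.card_erase_of_mem hn]
      refine ⟨⟨?_, ?_⟩, by omega⟩
      · intro a ha
        rw [Finset.mem_erase] at ha
        have := h1 a ha.2
        have := h2 a ha.2 n hn ha.1
        omega
      · intro a ha b hb
        exact h2 a (Finset.mem_of_mem_erase ha) b (Finset.mem_of_mem_erase hb)
    · left
      refine ⟨⟨?_, h2⟩, h3⟩
      intro a ha
      have := h1 a ha
      have : a ≠ n := fun h => hn (h ▸ ha)
      omega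
  calc _ ≤ _ := Finset.card_le_card this
    _ ≤ _ := Finset.card_union_le _ _
    _ ≤ _ := Nat.add_le_add_left Finset.card_image_le _

lemma card_validSets_le (n : ℕ) : ∀ k, (validSets n k).card ≤ (n - k).choose k := by
  induction n using Nat.strong_induction_on with
  | _ n ih =>
    intro k
    rcases k with _ | k
    · simpa using card_validSets_zero n
    rcases n with _ | _ | n
    · rw [card_validSets_small (by omega)]; simp
    · rw [card_validSets_small (by omega)]; simp
    have h1 := ih (n + 1) (by omega) (k + 1)
    have h2 := ih n (by omega) k
    refine (card_validSets_succ n k).trans ((Nat.add_le_add h1 h2).trans ?_)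
    rcases Nat.lt_or_ge n k with h | h
    · rw [Nat.choose_eq_zero_of_lt (by omega), Nat.choose_eq_zero_of_lt (by omega)]
      omega
    · have e1 : n + 1 - (k + 1) = n - k := by omega
      have e2 : n + 1 + 1 - (k + 1) = (n - k) + 1 := by omega
      rw [e1, e2, Nat.choose_succ_succ']
      omega

open Classical in
/-- The strings for which all locations of `K` are effective. -/
noncomputable def effStrings (n q : ℕ) (K : Finset ℕ) : Finset (Fin n → Fin q) :=
  Finset.univ.filter fun x => Effective K x

/-- Replacing `x (k+1)` by the nonzero difference `x (k+1) - x k` for each `k ∈ K` is injective. -/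
lemma card_effStrings_le {n q : ℕ} (hq : 2 ≤ q) {K : Finset ℕ} (hK : ValidLocs n K) :
    (effStrings n q K).card ≤ q ^ (n - K.card) * (q - 1) ^ K.card := by
  classical
  have : NeZero q := ⟨by omega⟩
  let p : Fin n → Prop := fun i => (i : ℕ) ≠ 0 ∧ (i : ℕ) - 1 ∈ K
  let pr : Fin n → Fin n := fun i => ⟨(i : ℕ) - 1, lt_of_le_of_lt (Nat.sub_le _ _) i.isLt⟩
  let φ : (Fin n → Fin q) → (Fin n → Fin q) := fun x i =>
    if p i then x i - x (pr i) else x i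
  let T : Fin n → Finset (Fin q) := fun i => if p i then Finset.univ.erase 0 else Finset.univ
  have hpr : ∀ i, p i → ¬ p (pr i) := by
    rintro i ⟨hi, hiK⟩ ⟨h, hiK'⟩
    have := hK.2 _ hiK _ hiK'
    simp only [pr] at h this
    omega
  have hmaps : ∀ x ∈ effStrings n q K, φ x ∈ Fintype.piFinset T := by
    intro x hx
    simp only [effStrings, Finset.mem_filter, Finset.mem_univ, true_and] at hx
    rw [Fintype.mem_piFinset]
    intro i
    by_cases hi : p i
    · simp only [φ, T, hi, if_true, Finset.mem_erase, Finset.mem_univ, and_true]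
      rw [sub_ne_zero]
      have h := hx _ hi.2 (by have := i.isLt; have := hi.1; omega)
      have e : (⟨(i : ℕ) - 1 + 1, by have := i.isLt; have := hi.1; omega⟩ : Fin n) = i :=
        Fin.ext (by have := hi.1; simp only; omega)
      rw [e] at h
      exact h.symm
    · simp [T, hi]
  have hinj : Function.Injective φ := by
    intro x y hxy
    have h0 : ∀ i, ¬ p i → x i = y i := by
      intro i hi
      have := congrFun hxy i
      simpa [φ, hi] using this
    funext i
    by_cases hi : p i
    · have h := congrFun hxy i
      simp only [φ, hi, if_true] at h
      rw [h0 _ (hpr i hi)] at h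
      exact sub_left_injective h
    · exact h0 i hi
  have hcard : (Finset.univ.filter p).card = K.card := by
    symm
    apply Finset.card_bij (fun k hk => (⟨k + 1, hK.1 k hk⟩ : Fin n))
    · intro a ha; simp [p, ha]
    · intro a ha b hb h; simpa using h
    · intro b hb
      simp only [p, Finset.mem_filter, Finset.mem_univ, true_and] at hb
      exact ⟨(b : ℕ) - 1, hb.2, Fin.ext (by have := hb.1; simp only; omega)⟩
  have hcard' : (Finset.univ.filter fun i => ¬ p i).card = n - K.card := by
    have := Finset.card_filter_add_card_filter_not (s := (Finset.univ : Finset (Fin n))) p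
    rw [hcard, Finset.card_univ, Fintype.card_fin] at this
    omega
  calc (effStrings n q K).card ≤ (Fintype.piFinset T).card :=
        Finset.card_le_card_of_injOn φ hmaps hinj.injOn
    _ = ∏ i, if p i then q - 1 else q := by
        rw [Fintype.card_piFinset]
        refine Finset.prod_congr rfl fun i _ => ?_
        by_cases hi : p i <;> simp [T, hi]
    _ = _ := by
        rw [Finset.prod_ite, Finset.prod_const, Finset.prod_const, hcard, hcard', mul_comm]

lemma card_nbrs_le (K : Finset ℕ) : (nbrs K).card ≤ 2 * K.card := by
  have h1 : (K.image (· + 1)).card ≤ K.card := Finset.card_image_le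
  have h2 : (K.image (· - 1)).card ≤ K.card := Finset.card_image_le
  have := Finset.card_union_le (K.image (· + 1)) (K.image (· - 1))
  unfold nbrs
  omega

lemma card_small_subsets_le (N : Finset ℕ) (a m : ℕ) (hN : N.card ≤ a) :
    (N.powerset.filter fun L => L.card ≤ m).card ≤ ∑ j ∈ Finset.range (m + 1), a.choose j := by
  have : (N.powerset.filter fun L => L.card ≤ m) ⊆
      (Finset.range (m + 1)).biUnion fun j => Finset.powersetCard j N := by
    intro L hL
    simp only [Finset.mem_filter, Finset.mem_powerset] at hL
    simp only [Finset.mem_biUnion, Finset.mem_range, Finset.mem_powersetCard]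
    exact ⟨L.card, by omega, hL.1, rfl⟩
  refine (Finset.card_le_card this).trans (Finset.card_biUnion_le.trans ?_)
  refine Finset.sum_le_sum fun j _ => ?_
  rw [Finset.card_powersetCard]
  exact Nat.choose_le_choose j hN

/-- Upper bound on the number of ordered pairs in normal form with `k` transpositions in the first
round and at most `D - k` in the second. -/
def pairBound (q n D k : ℕ) : ℕ :=
  (n - k).choose k * (q ^ (n - k) * (q - 1) ^ k *
    ∑ j ∈ Finset.range (D - k + 1), (2 * k).choose j)

open Classical in
/-- The ordered pairs at distance less than `d`, and the diagonal. -/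
noncomputable def closePairs (q n d : ℕ) : Finset ((Fin n → Fin q) × (Fin n → Fin q)) :=
  Finset.univ.filter fun p => p.1 = p.2 ∨ tdist p.1 p.2 < (d : ℕ∞)

lemma card_closePairs_le {q : ℕ} (hq : 2 ≤ q) (n d : ℕ) :
    (closePairs q n d).card ≤ ∑ k ∈ Finset.range (d - 1 + 1), pairBound q n (d - 1) k := by
  classical
  let F : ℕ → Finset ℕ → Finset ((Fin n → Fin q) × (Fin n → Fin q)) := fun k K =>
    ((effStrings n q K) ×ˢ ((nbrs K).powerset.filter fun L => L.card ≤ d - 1 - k)).image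
      fun p => (p.1, fun i => p.1 (swapMap K (swapMap p.2 i)))
  have hsub : closePairs q n d ⊆
      (Finset.range (d - 1 + 1)).biUnion fun k => (validSets n k).biUnion (F k) := by
    rintro ⟨x, y⟩ hxy
    simp only [closePairs, Finset.mem_filter, Finset.mem_univ, true_and] at hxy
    have key : ∃ L₁ L₂ : Finset ℕ, ValidLocs n L₁ ∧ L₁.card + L₂.card ≤ d - 1 ∧
        Effective L₁ x ∧ L₂ ⊆ nbrs L₁ ∧ y = fun i => x (swapMap L₁ (swapMap L₂ i)) := by
      rcases hxy with rfl | h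
      · refine ⟨∅, ∅, ⟨by simp, by simp⟩, by simp, by simp [Effective], by simp, ?_⟩
        funext i
        simp [swapMap]
      · exact normal_form_of_tdist_lt h
    obtain ⟨L₁, L₂, a, b, c, e, f⟩ := key
    simp only [Finset.mem_biUnion, Finset.mem_range, mem_validSets]
    refine ⟨L₁.card, by omega, L₁, ⟨a, rfl⟩, ?_⟩
    simp only [F, Finset.mem_image, Finset.mem_product, Finset.mem_filter, Finset.mem_powerset,
      effStrings, Finset.mem_univ, true_and]
    exact ⟨(x, L₂), ⟨c, e, by change L₂.card ≤ _; omega⟩, by rw [f]⟩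
  refine (Finset.card_le_card hsub).trans (Finset.card_biUnion_le.trans ?_)
  refine Finset.sum_le_sum fun k _ => ?_
  refine (Finset.card_biUnion_le_card_mul _ _
    (q ^ (n - k) * (q - 1) ^ k * ∑ j ∈ Finset.range (d - 1 - k + 1), (2 * k).choose j) ?_).trans
    (Nat.mul_le_mul_right _ (card_validSets_le n k))
  intro K hK
  rw [mem_validSets] at hK
  obtain ⟨hv, rfl⟩ := hK
  refine Finset.card_image_le.trans ?_
  rw [Finset.card_product]
  exact Nat.mul_le_mul (card_effStrings_le hq hv)
    (card_small_subsets_le _ _ _ (card_nbrs_le K))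

/-- Averaged Gilbert–Varshamov bound: a maximal independent set among the vertices whose
neighbourhood has at most twice the average size. -/
lemma exists_independent {α : Type*} [Fintype α] [DecidableEq α] [Nonempty α] (R : α → α → Prop)
    [DecidableRel R] (hrefl : ∀ a, R a a) (hsymm : ∀ a b, R a b → R b a) :
    ∃ C : Finset α, C.Nonempty ∧ (∀ a ∈ C, ∀ b ∈ C, a ≠ b → ¬ R a b) ∧
      Fintype.card α ^ 2 ≤
        4 * C.card * (Finset.univ.filter fun p : α × α => R p.1 p.2).card := by
  set N := Fintype.card α with hN
  set P := (Finset.univ.filter fun p : α × α => R p.1 p.2).card with hP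
  let b : α → ℕ := fun a => (Finset.univ.filter fun c => R a c).card
  have hsum : ∑ a, b a = P := by
    simp only [hP, b, Finset.card_filter]
    rw [← Finset.univ_product_univ, Finset.sum_product]
  let G : Finset α := Finset.univ.filter fun a => N * b a ≤ 2 * P
  have hNpos : 0 < N := Fintype.card_pos
  -- Markov's inequality: at least half of all vertices lie in `G`.
  have hG : N ≤ 2 * G.card := by
    have h1 : (Finset.univ.filter fun a => ¬ N * b a ≤ 2 * P).card * (2 * P) ≤ N * P := by
      calc _ = ∑ a ∈ Finset.univ.filter (fun a => ¬ N * b a ≤ 2 * P), 2 * P := by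
            rw [Finset.sum_const, smul_eq_mul]
        _ ≤ ∑ a ∈ Finset.univ.filter (fun a => ¬ N * b a ≤ 2 * P), N * b a := by
            refine Finset.sum_le_sum fun a ha => ?_
            rw [Finset.mem_filter] at ha
            omega
        _ ≤ ∑ a, N * b a := Finset.sum_le_sum_of_subset (Finset.filter_subset _ _)
        _ = N * P := by rw [← Finset.mul_sum, hsum]
    have hPpos : 0 < P := by
      obtain ⟨a⟩ := ‹Nonempty α›
      exact Finset.card_pos.2 ⟨(a, a), by simp [hrefl]⟩
    have h2 : 2 * (Finset.univ.filter fun a => ¬ N * b a ≤ 2 * P).card ≤ N := by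
      refine Nat.le_of_mul_le_mul_right ?_ hPpos
      linarith
    have h3 := Finset.card_filter_add_card_filter_not (s := (Finset.univ : Finset α))
      (fun a => N * b a ≤ 2 * P)
    rw [Finset.card_univ] at h3
    change G.card + _ = N at h3
    omega
  obtain ⟨C, hC, hmax⟩ := Finset.exists_max_image
    (G.powerset.filter fun C => ∀ a ∈ C, ∀ b ∈ C, a ≠ b → ¬ R a b) Finset.card
    ⟨∅, by simp⟩
  simp only [Finset.mem_filter, Finset.mem_powerset] at hC hmax
  have hcov : G ⊆ C.biUnion fun a => Finset.univ.filter fun c => R a c := by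
    intro g hg
    simp only [Finset.mem_biUnion, Finset.mem_filter, Finset.mem_univ, true_and]
    by_contra hno
    push Not at hno
    have hgC : g ∉ C := fun h => hno g h (hrefl g)
    have := hmax (insert g C) ⟨Finset.insert_subset hg hC.1, by
      intro a ha c hc hac
      rw [Finset.mem_insert] at ha hc
      rcases ha with rfl | ha <;> rcases hc with rfl | hc
      · exact absurd rfl hac
      · exact fun h => hno c hc (hsymm _ _ h)
      · exact hno a ha
      · exact hC.2 a ha c hc hac⟩
    rw [Finset.card_insert_of_notMem hgC] at this
    omega
  have hGC : N * G.card ≤ C.card * (2 * P) := by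
    calc N * G.card ≤ N * ∑ a ∈ C, b a :=
          Nat.mul_le_mul_left _ ((Finset.card_le_card hcov).trans Finset.card_biUnion_le)
      _ = ∑ a ∈ C, N * b a := Finset.mul_sum _ _ _
      _ ≤ ∑ a ∈ C, 2 * P := by
          refine Finset.sum_le_sum fun a ha => ?_
          have := hC.1 ha
          simpa [G] using this
      _ = _ := by rw [Finset.sum_const, smul_eq_mul]
  refine ⟨C, ?_, hC.2, by nlinarith⟩
  obtain ⟨g, hg⟩ := Finset.card_pos.1 (by omega : 0 < G.card)
  obtain ⟨a, ha, -⟩ := Finset.mem_biUnion.1 (hcov hg)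
  exact ⟨a, ha⟩

lemma bddAbove_codes (q n d : ℕ) : BddAbove { m : ℕ | ∃ C : Finset (Fin n → Fin q),
    C.Nonempty ∧ (∀ x ∈ C, ∀ x' ∈ C, x ≠ x' → (d : ℕ∞) ≤ tdist x x') ∧ C.card = m } := by
  refine ⟨q ^ n, ?_⟩
  rintro m ⟨C, -, -, rfl⟩
  simpa using Finset.card_le_univ C

/-- The Gilbert–Varshamov bound for the transposition distance. -/
lemma gv_bound {q : ℕ} (hq : 2 ≤ q) (n d : ℕ) :
    1 ≤ MstarBar q n d ∧ MstarBar q n d ≤ q ^ n ∧ (q ^ n) ^ 2 ≤ 4 * MstarBar q n d *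
      ∑ k ∈ Finset.range (d - 1 + 1), pairBound q n (d - 1) k := by
  classical
  have : NeZero q := ⟨by omega⟩
  obtain ⟨C, hne, hind, hcard⟩ := exists_independent
    (fun x y : Fin n → Fin q => x = y ∨ tdist x y < (d : ℕ∞)) (fun a => Or.inl rfl)
    (fun a b h => h.imp Eq.symm (fun h => by rwa [tdist_comm]))
  have hmem : ∃ C' : Finset (Fin n → Fin q), C'.Nonempty ∧
      (∀ x ∈ C', ∀ x' ∈ C', x ≠ x' → (d : ℕ∞) ≤ tdist x x') ∧ C'.card = C.card :=
    ⟨C, hne, fun x hx x' hx' hxx => not_lt.1 fun h => hind x hx x' hx' hxx (Or.inr h), rfl⟩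
  have hle : C.card ≤ MstarBar q n d := le_csSup (bddAbove_codes q n d) hmem
  refine ⟨(Finset.card_pos.2 hne).trans_le hle, ?_, ?_⟩
  · refine csSup_le ⟨_, hmem⟩ ?_
    rintro m ⟨C, -, -, rfl⟩
    simpa using Finset.card_le_univ C
  · have e : Fintype.card (Fin n → Fin q) = q ^ n := by simp
    rw [e] at hcard
    have h2 := card_closePairs_le hq n d
    unfold closePairs at h2
    calc _ ≤ _ := hcard
      _ ≤ _ := Nat.mul_le_mul (Nat.mul_le_mul_left _ hle) (by convert h2)

/-! ### Entropy bounds and the exponents `α_q`, `β_q` -/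

open Real

lemma binH_mul_log_two (x : ℝ) : binH x * log 2 = binEntropy x := by
  have : log 2 ≠ 0 := (log_pos one_lt_two).ne'
  simp only [binH, binEntropy, logb, log_inv]
  field_simp
  ring

/-- Chernoff-type bound for binomial coefficients: binomial probabilities sum to at most one. -/
lemma sum_choose_le_exp {N : ℕ} {p : ℝ} (hp0 : 0 < p) (hp1 : p < 1) (s : Finset ℕ)
    (hs : ∀ j ∈ s, 0 ≤ ((j : ℝ) - N * p) * (log p - log (1 - p))) :
    ∑ j ∈ s, (N.choose j : ℝ) ≤ exp (N * binEntropy p) := by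
  have h1p : 0 < 1 - p := by linarith
  have hs' : ∑ j ∈ s, (N.choose j : ℝ) =
      ∑ j ∈ s.filter (fun j => j ∈ Finset.range (N + 1)), (N.choose j : ℝ) := by
    rw [Finset.sum_filter]
    refine Finset.sum_congr rfl fun j _ => ?_
    split_ifs with h
    · rfl
    · rw [Nat.choose_eq_zero_of_lt (by simpa [Nat.lt_succ_iff] using h)]; simp
  have hbin : ∑ j ∈ Finset.range (N + 1), p ^ j * (1 - p) ^ (N - j) * (N.choose j : ℝ) = 1 := by
    rw [← add_pow]; simp
  have hterm : ∀ j ∈ s, j ∈ Finset.range (N + 1) →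
      exp (-(N * binEntropy p)) ≤ p ^ j * (1 - p) ^ (N - j) := by
    intro j hj hjN
    have hjN' : j ≤ N := by simpa [Nat.lt_succ_iff] using hjN
    rw [← exp_log (pow_pos hp0 j), ← exp_log (pow_pos h1p (N - j)), ← exp_add, exp_le_exp,
      log_pow, log_pow, Nat.cast_sub hjN']
    have := hs j hj
    simp only [binEntropy, log_inv]
    nlinarith
  have : exp (-(N * binEntropy p)) * ∑ j ∈ s, (N.choose j : ℝ) ≤ 1 := by
    rw [hs', Finset.mul_sum, ← hbin]
    calc _ ≤ ∑ j ∈ s.filter (fun j => j ∈ Finset.range (N + 1)),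
            p ^ j * (1 - p) ^ (N - j) * (N.choose j : ℝ) := by
          refine Finset.sum_le_sum fun j hj => ?_
          rw [Finset.mem_filter] at hj
          exact mul_le_mul_of_nonneg_right (hterm j hj.1 hj.2) (Nat.cast_nonneg _)
      _ ≤ _ := by
          refine Finset.sum_le_sum_of_subset_of_nonneg ?_ fun j _ _ => by positivity
          intro j hj
          exact (Finset.mem_filter.1 hj).2
  rw [exp_neg, inv_mul_le_iff₀ (exp_pos _)] at this
  linarith

lemma sum_range_choose_le_exp {N m : ℕ} {p : ℝ} (hp0 : 0 < p) (hp1 : p ≤ 1 / 2)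
    (hm : (m : ℝ) ≤ N * p) :
    ∑ j ∈ Finset.range (m + 1), (N.choose j : ℝ) ≤ exp (N * binEntropy p) := by
  refine sum_choose_le_exp hp0 (by linarith) _ fun j hj => ?_
  have hj' : (j : ℝ) ≤ m := by
    exact_mod_cast Nat.lt_succ_iff.1 (Finset.mem_range.1 hj)
  have : log p ≤ log (1 - p) := log_le_log hp0 (by linarith)
  exact mul_nonneg_of_nonpos_of_nonpos (by linarith) (by linarith)

lemma choose_le_exp {N j : ℕ} (hj : j ≤ N) :
    (N.choose j : ℝ) ≤ exp (N * binEntropy (j / N)) := by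
  rcases Nat.eq_zero_or_pos j with rfl | hj0
  · simp
  rcases hj.eq_or_lt with rfl | hjN
  · have : (j : ℝ) ≠ 0 := by positivity
    simp [div_self this]
  have hN : (0 : ℝ) < N := by exact_mod_cast hj0.trans hjN
  have hlt : (j : ℝ) < N := by exact_mod_cast hjN
  have := sum_choose_le_exp (N := N) (p := j / N) (by positivity) (by rwa [div_lt_one hN]) {j}
    (by intro i hi; rw [Finset.mem_singleton.1 hi, mul_div_cancel₀ _ hN.ne']; simp)
  simpa using this

/-- `α_q · log 2` in terms of `negMulLog`; the two agree for `l < 1`. -/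
noncomputable def alphaNat (q : ℕ) (l : ℝ) : ℝ :=
  -negMulLog (1 - l) + negMulLog l + negMulLog (1 - 2 * l) + (1 - l) * log q + l * log ((q : ℝ) - 1)

lemma alphaFun_mul_log_two (q : ℕ) {l : ℝ} (hl : l < 1) :
    alphaFun q l * log 2 = alphaNat q l := by
  have hlog : log 2 ≠ 0 := (log_pos one_lt_two).ne'
  have hu : 1 - l ≠ 0 := by linarith
  have h1 := negMulLog_mul (1 - l) (l / (1 - l))
  have h2 := negMulLog_mul (1 - l) (1 - l / (1 - l))
  have e1 : (1 - l) * (l / (1 - l)) = l := mul_div_cancel₀ _ hu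
  have e2 : (1 - l) * (1 - l / (1 - l)) = 1 - 2 * l := by rw [mul_sub, e1]; ring
  rw [e1] at h1
  rw [e2] at h2
  have e3 : alphaFun q l * log 2 = (1 - l) * binEntropy (l / (1 - l)) + (1 - l) * log q +
      l * log ((q : ℝ) - 1) := by
    rw [← binH_mul_log_two]
    simp only [alphaFun, logb]
    field_simp
  rw [e3, binEntropy_eq_negMulLog_add_negMulLog_one_sub, alphaNat]
  linarith

lemma continuous_alphaNat (q : ℕ) : Continuous (alphaNat q) := by
  unfold alphaNat; fun_prop

lemma hasDerivAt_alphaNat (q : ℕ) {l : ℝ} (h0 : 0 < l) (h1 : l < 1 / 2) :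
    HasDerivAt (alphaNat q)
      (2 * log (1 - 2 * l) - log l - log (1 - l) - log q + log ((q : ℝ) - 1)) l := by
  have a1 : HasDerivAt (fun x : ℝ => 1 - x) (-1) l := by
    simpa using (hasDerivAt_id l).const_sub 1
  have a2 : HasDerivAt (fun x : ℝ => 1 - 2 * x) (-2) l := by
    simpa using ((hasDerivAt_id l).const_mul 2).const_sub 1
  have b1 := (hasDerivAt_negMulLog (x := 1 - l) (by linarith)).comp l a1
  have b2 := (hasDerivAt_negMulLog (x := 1 - 2 * l) (by linarith)).comp l a2
  have b3 := hasDerivAt_negMulLog (x := l) h0.ne'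
  have := (((b1.neg.add b3).add b2).add (a1.mul_const (log q))).add
    ((hasDerivAt_id l).mul_const (log ((q : ℝ) - 1)))
  refine this.congr_deriv ?_
  ring

lemma rhoStar_bounds {q : ℕ} (hq : 2 ≤ q) : 0 ≤ rhoStar q ∧ rhoStar q < 1 / 2 := by
  have hq' : (2 : ℝ) ≤ q := by exact_mod_cast hq
  have h1 : 0 < √((q : ℝ) / (5 * q - 4)) :=
    sqrt_pos.2 (div_pos (by linarith) (by linarith))
  have h2 : √((q : ℝ) / (5 * q - 4)) ≤ 1 := by
    rw [sqrt_le_one]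
    rw [div_le_one (by linarith)]
    linarith
  unfold rhoStar
  constructor <;> linarith

lemma rhoStar_sq {q : ℕ} (hq : 2 ≤ q) : (1 - 2 * rhoStar q) ^ 2 * (5 * q - 4) = q := by
  have hq' : (2 : ℝ) ≤ q := by exact_mod_cast hq
  have e : 1 - 2 * rhoStar q = √((q : ℝ) / (5 * q - 4)) := by unfold rhoStar; ring
  rw [e, sq_sqrt (div_nonneg (by linarith) (by linarith))]
  exact div_mul_cancel₀ _ (by linarith)

/-- The derivative of `alphaNat q` as a difference of two logarithms, so that its sign is decided by
comparing polynomials in `l`. -/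
lemma deriv_log_eq {q : ℕ} (hq : 2 ≤ q) {l : ℝ} (h0 : 0 < l) (h1 : l < 1 / 2) :
    2 * log (1 - 2 * l) - log l - log (1 - l) - log q + log ((q : ℝ) - 1) =
      log ((1 - 2 * l) ^ 2 * (q - 1)) - log (l * (1 - l) * q) := by
  have hq' : (2 : ℝ) ≤ q := by exact_mod_cast hq
  have : (1 - 2 * l) ≠ 0 := by linarith
  have : (1 - l) ≠ 0 := by linarith
  have : (q : ℝ) - 1 ≠ 0 := by linarith
  have : (q : ℝ) ≠ 0 := by linarith
  rw [log_mul (by positivity) (by positivity), log_mul (by positivity) (by positivity),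
    log_mul (by positivity) (by positivity), log_pow]
  push_cast
  ring

lemma alphaNat_monotoneOn {q : ℕ} (hq : 2 ≤ q) :
    MonotoneOn (alphaNat q) (Set.Icc 0 (rhoStar q)) := by
  have hq' : (2 : ℝ) ≤ q := by exact_mod_cast hq
  obtain ⟨hr0, hr1⟩ := rhoStar_bounds hq
  refine monotoneOn_of_deriv_nonneg (convex_Icc _ _) (continuous_alphaNat q).continuousOn ?_ ?_
  · rw [interior_Icc]
    rintro l ⟨h0, h1⟩
    exact (hasDerivAt_alphaNat q h0 (h1.trans hr1)).differentiableAt.differentiableWithinAt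
  · rw [interior_Icc]
    rintro l ⟨h0, h1⟩
    rw [(hasDerivAt_alphaNat q h0 (h1.trans hr1)).deriv, deriv_log_eq hq h0 (h1.trans hr1),
      sub_nonneg]
    have h2 : 0 < l * (1 - l) := mul_pos h0 (by linarith)
    refine log_le_log (mul_pos h2 (by linarith)) ?_
    have h3 : (1 - 2 * rhoStar q) ^ 2 ≤ (1 - 2 * l) ^ 2 :=
      pow_le_pow_left₀ (by linarith) (by linarith) 2
    have h4 := mul_le_mul_of_nonneg_right h3 (by linarith : (0 : ℝ) ≤ 5 * q - 4)
    rw [rhoStar_sq hq] at h4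
    nlinarith

lemma alphaNat_antitoneOn {q : ℕ} (hq : 2 ≤ q) :
    AntitoneOn (alphaNat q) (Set.Icc (rhoStar q) (1 / 2)) := by
  have hq' : (2 : ℝ) ≤ q := by exact_mod_cast hq
  obtain ⟨hr0, hr1⟩ := rhoStar_bounds hq
  refine antitoneOn_of_deriv_nonpos (convex_Icc _ _) (continuous_alphaNat q).continuousOn ?_ ?_
  · rw [interior_Icc]
    rintro l ⟨h0, h1⟩
    exact (hasDerivAt_alphaNat q (hr0.trans_lt h0) h1).differentiableAt.differentiableWithinAt
  · rw [interior_Icc]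
    rintro l ⟨h0, h1⟩
    have h0' := hr0.trans_lt h0
    rw [(hasDerivAt_alphaNat q h0' h1).deriv, deriv_log_eq hq h0' h1, sub_nonpos]
    have h2 : 0 < (1 - 2 * l) ^ 2 := pow_pos (by linarith) 2
    refine log_le_log (mul_pos h2 (by linarith)) ?_
    have h3 : (1 - 2 * l) ^ 2 ≤ (1 - 2 * rhoStar q) ^ 2 :=
      pow_le_pow_left₀ (by linarith) (by linarith) 2
    have h4 := mul_le_mul_of_nonneg_right h3 (by linarith : (0 : ℝ) ≤ 5 * q - 4)
    rw [rhoStar_sq hq] at h4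
    nlinarith

lemma betaFun_mul_log_two {q : ℕ} (hq : 2 ≤ q) (l : ℝ) :
    betaFun q l * log 2 = alphaNat q (min l (rhoStar q)) := by
  obtain ⟨hr0, hr1⟩ := rhoStar_bounds hq
  unfold betaFun
  split_ifs with h
  · rw [alphaFun_mul_log_two q (by linarith), min_eq_left h]
  · rw [alphaFun_mul_log_two q (by linarith), min_eq_right (by linarith)]

lemma betaFun_mono {q : ℕ} (hq : 2 ≤ q) {l m : ℝ} (hl : 0 ≤ l) (hlm : l ≤ m) :
    betaFun q l ≤ betaFun q m := by
  obtain ⟨hr0, hr1⟩ := rhoStar_bounds hq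
  refine le_of_mul_le_mul_right ?_ (log_pos one_lt_two)
  rw [betaFun_mul_log_two hq, betaFun_mul_log_two hq]
  exact alphaNat_monotoneOn hq ⟨le_min hl hr0, min_le_right _ _⟩
    ⟨le_min (hl.trans hlm) hr0, min_le_right _ _⟩ (min_le_min_right _ hlm)

lemma alphaFun_le_betaFun {q : ℕ} (hq : 2 ≤ q) {l : ℝ} (h1 : l ≤ 1 / 2) :
    alphaFun q l ≤ betaFun q l := by
  obtain ⟨hr0, hr1⟩ := rhoStar_bounds hq
  refine le_of_mul_le_mul_right ?_ (log_pos one_lt_two)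
  rw [betaFun_mul_log_two hq, alphaFun_mul_log_two q (by linarith)]
  rcases le_total l (rhoStar q) with h | h
  · rw [min_eq_left h]
  · rw [min_eq_right h]
    exact alphaNat_antitoneOn hq ⟨le_rfl, hr1.le⟩ ⟨h, h1⟩ h

/-- The number of effective first rounds with `k` transpositions has exponent `α_q(k/n)`. -/
lemma first_round_le_exp {q : ℕ} (hq : 2 ≤ q) {n k : ℕ} (hn : 0 < n) (hk : 2 * k ≤ n) :
    (((n - k).choose k * (q ^ (n - k) * (q - 1) ^ k) : ℕ) : ℝ) ≤
      exp (n * (alphaFun q (k / n) * log 2)) := by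
  have hq' : (2 : ℝ) ≤ q := by exact_mod_cast hq
  have hn' : (0 : ℝ) < n := by exact_mod_cast hn
  have hkn : (2 : ℝ) * k ≤ n := by exact_mod_cast hk
  have hk0 : (0 : ℝ) ≤ k := Nat.cast_nonneg k
  have hc := choose_le_exp (N := n - k) (j := k) (by omega)
  have hsub : ((n - k : ℕ) : ℝ) = n - k := Nat.cast_sub (by omega)
  have hq1 : ((q - 1 : ℕ) : ℝ) = q - 1 := by rw [Nat.cast_sub (by omega)]; simp
  have hnk : (n : ℝ) - k ≠ 0 := by linarith
  have hlog : log 2 ≠ 0 := (log_pos one_lt_two).ne'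
  have earg : (k : ℝ) / n / (1 - k / n) = k / (n - k) := by
    have : 1 - (k : ℝ) / n = (n - k) / n := by field_simp
    rw [this]
    field_simp
  have e : n * (alphaFun q (k / n) * log 2) = (n - k) * binEntropy (k / (n - k)) +
      ((n - k) * log q + k * log ((q : ℝ) - 1)) := by
    rw [← binH_mul_log_two]
    simp only [alphaFun, logb, earg]
    field_simp
    ring
  rw [e, exp_add, exp_add]
  push_cast
  rw [hsub] at hc
  have p1 : (q : ℝ) ^ (n - k) = exp ((n - k) * log q) := by
    rw [← hsub, exp_nat_mul, exp_log (by linarith)]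
  have p2 : ((q - 1 : ℕ) : ℝ) ^ k = exp (k * log ((q : ℝ) - 1)) := by
    rw [hq1, exp_nat_mul, exp_log (by linarith)]
  rw [p1, p2]
  exact mul_le_mul_of_nonneg_right hc (by positivity)

/-! ### The asymptotic rate -/

/-- The function maximised in the theorem. -/
noncomputable def objective (q : ℕ) (δ l : ℝ) : ℝ :=
  2 * l * binH ((δ - l) / (2 * l)) + betaFun q l

lemma binH_le_one (x : ℝ) : binH x ≤ 1 := by
  refine le_of_mul_le_mul_right ?_ (log_pos one_lt_two)
  rw [binH_mul_log_two, one_mul]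
  exact binEntropy_le_log_two

lemma bddAbove_objective {q : ℕ} (hq : 2 ≤ q) {δ : ℝ} (h0 : 0 ≤ δ) :
    BddAbove (objective q δ '' Set.Icc (δ / 3) δ) := by
  refine ⟨2 * δ + betaFun q δ, ?_⟩
  rintro _ ⟨l, ⟨hl, hl'⟩, rfl⟩
  have hl0 : 0 ≤ l := by linarith
  have := betaFun_mono hq hl0 hl'
  have := mul_le_mul_of_nonneg_left (binH_le_one ((δ - l) / (2 * l))) (by linarith : 0 ≤ 2 * l)
  unfold objective
  linarith

lemma objective_half (q : ℕ) {δ : ℝ} (h0 : 0 ≤ δ) :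
    objective q δ (δ / 2) = δ + betaFun q (δ / 2) := by
  unfold objective
  rcases h0.eq_or_lt with rfl | h
  · simp
  have e : (δ - δ / 2) / (2 * (δ / 2)) = 2⁻¹ := by field_simp; ring
  have : binH 2⁻¹ = 1 := by
    have h2 := binH_mul_log_two 2⁻¹
    rw [binEntropy_two_inv] at h2
    exact mul_right_cancel₀ (log_pos one_lt_two).ne' (h2.trans (one_mul _).symm)
  rw [e, this]
  ring

/-- Each summand of the pair count is bounded by the maximal exponent. For `k ≤ δn/2` the second
round is bounded by all `2 ^ (2k)` subsets, compared with the objective at `δ/2`; for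
`k > δn/2` the entropy bound applies with `p = (δn - k)/(2k) < 1/2`. -/
lemma pairBound_le_exp {q : ℕ} (hq : 2 ≤ q) {δ : ℝ} (h0 : 0 ≤ δ) {n k : ℕ} (hn : 0 < n)
    (hk : k ≤ ⌈δ * (n : ℝ)⌉₊ - 1) :
    (pairBound q n (⌈δ * (n : ℝ)⌉₊ - 1) k : ℝ) ≤
      exp (n * (sSup (objective q δ '' Set.Icc (δ / 3) δ) * log 2)) := by
  set S := sSup (objective q δ '' Set.Icc (δ / 3) δ) with hS
  set D := ⌈δ * (n : ℝ)⌉₊ - 1 with hD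
  have hbdd := bddAbove_objective hq h0
  have hlog : 0 < log 2 := log_pos one_lt_two
  rcases Nat.lt_or_ge n (2 * k) with hkn | hkn
  · rw [pairBound, Nat.choose_eq_zero_of_lt (by omega)]
    simpa using (exp_pos _).le
  have hn' : (0 : ℝ) < n := by exact_mod_cast hn
  have hkn' : (2 : ℝ) * k ≤ n := by exact_mod_cast hkn
  have hk0 : (0 : ℝ) ≤ k := Nat.cast_nonneg k
  have hl0 : (0 : ℝ) ≤ k / n := by positivity
  have hA := first_round_le_exp hq hn hkn
  have hab : alphaFun q (k / n) ≤ betaFun q (k / n) :=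
    alphaFun_le_betaFun hq (by rw [div_le_iff₀ hn']; linarith)
  have hA' := hA.trans (exp_le_exp.2 (mul_le_mul_of_nonneg_left
    (mul_le_mul_of_nonneg_right hab hlog.le) hn'.le))
  have hfac : (pairBound q n D k : ℝ) =
      (((n - k).choose k * (q ^ (n - k) * (q - 1) ^ k) : ℕ) : ℝ) *
        ∑ j ∈ Finset.range (D - k + 1), ((2 * k).choose j : ℝ) := by
    unfold pairBound
    push_cast
    ring
  rw [hfac]
  suffices h : ∃ E : ℝ, ∑ j ∈ Finset.range (D - k + 1), ((2 * k).choose j : ℝ) ≤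
      exp (n * (E * log 2)) ∧ betaFun q (k / n) + E ≤ S by
    obtain ⟨E, hE, hES⟩ := h
    calc _ ≤ exp (n * (betaFun q (k / n) * log 2)) * exp (n * (E * log 2)) :=
          mul_le_mul hA' hE (by positivity) (by positivity)
      _ = exp (n * ((betaFun q (k / n) + E) * log 2)) := by rw [← exp_add]; ring_nf
      _ ≤ _ := by gcongr
  rcases le_or_gt ((2 : ℝ) * k) (δ * n) with hc | hc
  · refine ⟨2 * (k / n), ?_, ?_⟩
    · have e : n * (2 * ((k : ℝ) / n) * log 2) = ((2 * k : ℕ) : ℝ) * log 2 := by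
        push_cast; field_simp
      rw [e, exp_nat_mul, exp_log two_pos]
      have hle : ∑ j ∈ Finset.range (D - k + 1), (2 * k).choose j ≤ 2 ^ (2 * k) := by
        rw [← Nat.sum_range_choose]
        calc _ = ∑ j ∈ (Finset.range (D - k + 1)).filter (fun j => j ∈ Finset.range (2 * k + 1)),
                (2 * k).choose j := by
              rw [Finset.sum_filter]
              refine Finset.sum_congr rfl fun j _ => ?_
              split_ifs with h
              · rfl
              · rw [Nat.choose_eq_zero_of_lt (by simpa [Nat.lt_succ_iff] using h)]
          _ ≤ _ := Finset.sum_le_sum_of_subset fun j hj => (Finset.mem_filter.1 hj).2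
      exact_mod_cast hle
    · have hle : (k : ℝ) / n ≤ δ / 2 := by rw [div_le_iff₀ hn']; linarith
      have h1 : objective q δ (δ / 2) ≤ S :=
        le_csSup hbdd ⟨δ / 2, ⟨by linarith, by linarith⟩, rfl⟩
      rw [objective_half q h0] at h1
      have := betaFun_mono hq hl0 hle
      linarith
  · have hkpos : (0 : ℝ) < k := by nlinarith
    have hkpos' : 0 < k := by exact_mod_cast hkpos
    have hDlt : (D : ℝ) < δ * n := Nat.lt_ceil.1 (by omega)
    have hkD : (k : ℝ) ≤ D := by exact_mod_cast hk
    have hle : (k : ℝ) / n ≤ δ := by rw [div_le_iff₀ hn']; linarith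
    have hge : δ / 2 ≤ (k : ℝ) / n := by rw [le_div_iff₀ hn']; linarith
    have ep : (δ - (k : ℝ) / n) / (2 * (k / n)) = (δ * n - k) / (2 * k) := by field_simp
    refine ⟨2 * (k / n) * binH ((δ - (k : ℝ) / n) / (2 * (k / n))), ?_, ?_⟩
    · have e : n * (2 * ((k : ℝ) / n) * binH ((δ - (k : ℝ) / n) / (2 * (k / n))) * log 2) =
          ((2 * k : ℕ) : ℝ) * binEntropy ((δ * n - k) / (2 * k)) := by
        rw [ep, ← binH_mul_log_two]
        push_cast
        field_simp
      rw [e]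
      refine sum_range_choose_le_exp (div_pos (by linarith) (by linarith)) ?_ ?_
      · rw [div_le_iff₀ (by linarith)]; linarith
      · rw [Nat.cast_sub hk]
        push_cast
        rw [mul_div_cancel₀ _ (by linarith)]
        linarith
    · have h1 : objective q δ (k / n) ≤ S :=
        le_csSup hbdd ⟨k / n, ⟨by linarith, hle⟩, rfl⟩
      unfold objective at h1
      linarith

/-- Finite-length form of the theorem; the error term absorbs the polynomial factor through
`4 (n + 1) ≤ n ^ 2`. -/
lemma rate_bound {q : ℕ} (hq : 2 ≤ q) {δ : ℝ} (h0 : 0 ≤ δ) (h1 : δ ≤ 1) {n : ℕ} (hn : 5 ≤ n) :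
    2 * logb 2 q - sSup (objective q δ '' Set.Icc (δ / 3) δ) - 2 / log 2 * (log n / n) ≤
      logb 2 (MstarBar q n ⌈δ * (n : ℝ)⌉₊) / n := by
  set S := sSup (objective q δ '' Set.Icc (δ / 3) δ) with hS
  set d := ⌈δ * (n : ℝ)⌉₊ with hd
  obtain ⟨hM1, -, hgv⟩ := gv_bound hq n d
  have hlog : 0 < log 2 := log_pos one_lt_two
  have hn' : (5 : ℝ) ≤ n := by exact_mod_cast hn
  have hq' : (2 : ℝ) ≤ q := by exact_mod_cast hq
  have hM : (1 : ℝ) ≤ (MstarBar q n d : ℝ) := by exact_mod_cast hM1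
  have hdn : d ≤ n := by
    rw [hd, Nat.ceil_le]
    nlinarith
  have hsum : ((∑ k ∈ Finset.range (d - 1 + 1), pairBound q n (d - 1) k : ℕ) : ℝ) ≤
      (n + 1) * exp (n * (S * log 2)) := by
    push_cast
    calc _ ≤ ∑ k ∈ Finset.range (d - 1 + 1), exp (n * (S * log 2)) := by
          refine Finset.sum_le_sum fun k hk => ?_
          exact pairBound_le_exp hq h0 (by omega)
            (Nat.lt_succ_iff.1 (Finset.mem_range.1 hk))
      _ = ((d - 1 + 1 : ℕ) : ℝ) * exp (n * (S * log 2)) := by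
          rw [Finset.sum_const, Finset.card_range, nsmul_eq_mul]
      _ ≤ _ := by
          refine mul_le_mul_of_nonneg_right ?_ (exp_pos _).le
          exact_mod_cast (by omega : d - 1 + 1 ≤ n + 1)
  have hgv' : ((q : ℝ) ^ n) ^ 2 ≤ (n : ℝ) ^ 2 * (MstarBar q n d : ℝ) * exp (n * (S * log 2)) := by
    calc ((q : ℝ) ^ n) ^ 2 ≤ 4 * (MstarBar q n d : ℝ) *
            ((∑ k ∈ Finset.range (d - 1 + 1), pairBound q n (d - 1) k : ℕ) : ℝ) := by
          exact_mod_cast hgv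
      _ ≤ 4 * (MstarBar q n d : ℝ) * ((n + 1) * exp (n * (S * log 2))) := by gcongr
      _ = (4 * (n + 1)) * ((MstarBar q n d : ℝ) * exp (n * (S * log 2))) := by ring
      _ ≤ (n : ℝ) ^ 2 * ((MstarBar q n d : ℝ) * exp (n * (S * log 2))) := by
          refine mul_le_mul_of_nonneg_right ?_ (by positivity)
          nlinarith
      _ = _ := by ring
  have hl := log_le_log (by positivity) hgv'
  rw [log_mul (by positivity) (by positivity), log_mul (by positivity) (by positivity), log_exp,
    log_pow, log_pow, log_pow] at hl
  push_cast at hl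
  have hnpos : (0 : ℝ) < n := by linarith
  refine le_of_mul_le_mul_right ?_ (mul_pos hnpos hlog)
  have e1 : logb 2 (MstarBar q n d) / n * (n * log 2) = log (MstarBar q n d) := by
    simp only [logb]; field_simp
  have e2 : (2 * logb 2 q - S - 2 / log 2 * (log n / n)) * (n * log 2) =
      2 * (n * log q) - n * (S * log 2) - 2 * log n := by
    simp only [logb]; field_simp
  rw [e1, e2]
  linarith

theorem stmt18 (q : ℕ) (hq : 2 ≤ q) (δ : ℝ) (h0 : 0 ≤ δ) (h1 : δ ≤ 1) :
    2 * Real.logb 2 q -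
        sSup ((fun l : ℝ => 2 * l * binH ((δ - l) / (2 * l)) + betaFun q l) ''
          Set.Icc (δ / 3) δ)
      ≤ Filter.liminf
          (fun n : ℕ => Real.logb 2 (MstarBar q n ⌈δ * (n : ℝ)⌉₊) / n)
          Filter.atTop := by
  change 2 * Real.logb 2 q - sSup (objective q δ '' Set.Icc (δ / 3) δ) ≤ _
  -- The rates are at most `log₂ q`, so the limit inferior is not a junk value.
  have hcob : Filter.IsCoboundedUnder (· ≥ ·) Filter.atTop
      (fun n : ℕ => Real.logb 2 (MstarBar q n ⌈δ * (n : ℝ)⌉₊) / n) := by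
    refine Filter.IsBoundedUnder.isCoboundedUnder_ge ⟨Real.logb 2 q, ?_⟩
    rw [Filter.eventually_map]
    filter_upwards [Filter.eventually_gt_atTop 0] with n hn
    obtain ⟨hM1, hM2, -⟩ := gv_bound hq n ⌈δ * (n : ℝ)⌉₊
    have hn' : (0 : ℝ) < n := by exact_mod_cast hn
    rw [div_le_iff₀ hn']
    have h : Real.logb 2 (MstarBar q n ⌈δ * (n : ℝ)⌉₊) ≤ Real.logb 2 ((q : ℝ) ^ n) :=
      Real.logb_le_logb_of_le one_lt_two (by exact_mod_cast hM1) (by exact_mod_cast hM2)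
    rw [Real.logb_pow] at h
    linarith
  have hlim : Filter.Tendsto (fun n : ℕ => 2 / Real.log 2 * (Real.log n / n)) Filter.atTop
      (nhds 0) := by
    have h := (Real.isLittleO_log_id_atTop.tendsto_div_nhds_zero.comp
      tendsto_natCast_atTop_atTop).const_mul (2 / Real.log 2)
    rw [mul_zero] at h
    exact h
  refine le_of_forall_pos_sub_le fun ε hε => ?_
  refine Filter.le_liminf_of_le hcob ?_
  filter_upwards [hlim.eventually_lt_const hε, Filter.eventually_ge_atTop 5] with n hn hn5
  have := rate_bound hq h0 h1 hn5
  linarith
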